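/- For each k ∈ ℕ, the set of nonempty compact subsets of ℝ having at most k connected components is closed in the hyperspace of nonempty compact subsets of ℝ; consequently the set of compact sets with finitely many connected components is an Fσ-set. -/

import Mathlib

open Set TopologicalSpace

lemma comp_eq_iff (K : Set ℝ) (a b : K) :
    (ConnectedComponents.mk a = ConnectedComponents.mk b) ↔ uIcc (a : ℝ) b ⊆ K := by
  rw [ConnectedComponents.coe_eq_coe']
  constructor
  · intro h
    have hp : IsPreconnected (Subtype.val '' connectedComponent b : Set ℝ) :=
      isPreconnected_connectedComponent.image _ continuous_subtype_val.continuousOn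
    have := hp.ordConnected.uIcc_subset (mem_image_of_mem _ h)
      (mem_image_of_mem _ (mem_connectedComponent (x := b)))
    refine this.trans ?_
    rintro _ ⟨z, -, rfl⟩
    exact z.2
  · intro h
    have hp : IsPreconnected (Subtype.val ⁻¹' (uIcc (a : ℝ) b) : Set K) := by
      rw [← Topology.IsInducing.subtypeVal.isPreconnected_image, Subtype.image_preimage_coe,
        inter_eq_self_of_subset_right h]
      exact isPreconnected_uIcc
    exact hp.subset_connectedComponent (x := b) right_mem_uIcc left_mem_uIcc

lemma comp_ne_iff (K : Set ℝ) (a b : K) :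
    (ConnectedComponents.mk a ≠ ConnectedComponents.mk b) ↔
      ∃ g, g ∉ K ∧ ((a : ℝ) - g) * (b - g) < 0 := by
  rw [Ne, comp_eq_iff, not_subset]
  constructor
  · rintro ⟨g, hg, hgK⟩
    refine ⟨g, hgK, ?_⟩
    have ha : (a : ℝ) ≠ g := fun h => hgK (h ▸ a.2)
    have hb : (b : ℝ) ≠ g := fun h => hgK (h ▸ b.2)
    rw [mem_uIcc] at hg
    rw [mul_neg_iff]
    rcases hg with ⟨h1, h2⟩ | ⟨h1, h2⟩
    · right
      exact ⟨by linarith [lt_of_le_of_ne h1 ha], by linarith [lt_of_le_of_ne h2 hb.symm]⟩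
    · left
      exact ⟨by linarith [lt_of_le_of_ne h2 ha.symm], by linarith [lt_of_le_of_ne h1 hb]⟩
  · rintro ⟨g, hgK, hg⟩
    refine ⟨g, ?_, hgK⟩
    rw [mem_uIcc]
    rw [mul_neg_iff] at hg
    rcases hg with ⟨h1, h2⟩ | ⟨h1, h2⟩
    · right; constructor <;> linarith
    · left; constructor <;> linarith

lemma not_card_le_iff (K : Set ℝ) (k : ℕ) :
    ¬ (Cardinal.mk (ConnectedComponents K) ≤ k) ↔
      ∃ x : Fin (k + 1) → ℝ, (∀ i, x i ∈ K) ∧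
        ∀ i j, i ≠ j → ∃ g, g ∉ K ∧ (x i - g) * (x j - g) < 0 := by
  have h1 : ¬ (Cardinal.mk (ConnectedComponents K) ≤ k) ↔
      Nonempty (Fin (k + 1) ↪ ConnectedComponents K) := by
    rw [not_le, ← Order.succ_le_iff, ← Cardinal.nat_succ, ← Cardinal.mk_fin, Cardinal.le_def]
  rw [h1]
  constructor
  · rintro ⟨f⟩
    choose y hy using fun i => ConnectedComponents.surjective_coe (f i)
    refine ⟨fun i => y i, fun i => (y i).2, fun i j hij => ?_⟩
    refine (comp_ne_iff K (y i) (y j)).1 ?_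
    intro h
    exact hij (f.injective ((hy i).symm.trans (h.trans (hy j))))
  · rintro ⟨x, hx, h⟩
    refine ⟨⟨fun i => ConnectedComponents.mk ⟨x i, hx i⟩, fun i j hij => ?_⟩⟩
    by_contra hne
    exact (comp_ne_iff K ⟨x i, hx i⟩ ⟨x j, hx j⟩).2 (h i j hne) hij

lemma closed_card_le (k : ℕ) :
    IsClosed {K : NonemptyCompacts ℝ |
        Cardinal.mk (ConnectedComponents (K : Set ℝ)) ≤ k} := by
  rw [← isOpen_compl_iff, isOpen_iff_mem_nhds]
  intro K hK
  rw [mem_compl_iff, mem_setOf_eq, not_card_le_iff] at hK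
  obtain ⟨x, hx, h⟩ := hK
  choose! g hgK hg using h
  let U : Fin (k + 1) → Set ℝ := fun i => {y | ∀ j, i ≠ j →
    0 < (y - g i j) * (x i - g i j) ∧ 0 < (y - g j i) * (x i - g j i)}
  have hU : ∀ i, IsOpen (U i) := by
    intro i
    simp only [U, setOf_forall, setOf_and]
    refine isOpen_iInter_of_finite fun j => isOpen_iInter_of_finite fun _ => ?_
    exact (isOpen_lt (by fun_prop) (by fun_prop)).inter (isOpen_lt (by fun_prop) (by fun_prop))
  have hxU : ∀ i, x i ∈ U i := by
    intro i j hij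
    have e1 := hg i j hij
    have e2 := hg j i hij.symm
    constructor
    · exact mul_self_pos.2 fun h0 => by simp [h0] at e1
    · exact mul_self_pos.2 fun h0 => by simp [h0] at e2
  have o1 : ∀ i, ∀ᶠ L : NonemptyCompacts ℝ in nhds K, ((L : Set ℝ) ∩ U i).Nonempty := fun i =>
    (NonemptyCompacts.isOpen_inter_nonempty_of_isOpen (hU i)).mem_nhds ⟨x i, hx i, hxU i⟩
  have o2 : ∀ i j, i ≠ j → ∀ᶠ L : NonemptyCompacts ℝ in nhds K, (L : Set ℝ) ⊆ {g i j}ᶜ :=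
    fun i j hij => (NonemptyCompacts.isOpen_subsets_of_isOpen isOpen_compl_singleton).mem_nhds
      (by simpa using hgK i j hij)
  have o2' := fun i j => Filter.eventually_all.2 (o2 i j)
  filter_upwards [Filter.eventually_all.2 o1,
    Filter.eventually_all.2 fun i => Filter.eventually_all.2 (o2' i)] with L h1 h2
  rw [mem_compl_iff, mem_setOf_eq, not_card_le_iff]
  choose y hyL hyU using h1
  refine ⟨y, hyL, fun i j hij => ⟨g i j, fun hm => h2 i j hij hm rfl, ?_⟩⟩
  have a1 := (hyU i j hij).1
  have a2 := (hyU j i hij.symm).2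
  have a3 := hg i j hij
  by_contra! hc
  have p1 := mul_pos a1 a2
  nlinarith [mul_nonneg hc (neg_nonneg.2 a3.le)]

theorem finitely_many_components_Fsigma :
    (∀ k : ℕ,
      IsClosed {K : NonemptyCompacts ℝ |
        Cardinal.mk (ConnectedComponents (K : Set ℝ)) ≤ k}) ∧
    ∃ F : ℕ → Set (NonemptyCompacts ℝ), (∀ n, IsClosed (F n)) ∧
      {K : NonemptyCompacts ℝ | Finite (ConnectedComponents (K : Set ℝ))} = ⋃ n, F n := by
  refine ⟨closed_card_le, _, closed_card_le, ?_⟩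
  ext K
  simp only [mem_setOf_eq, mem_iUnion]
  rw [← Cardinal.lt_aleph0_iff_finite]
  constructor
  · intro h
    obtain ⟨n, hn⟩ := Cardinal.lt_aleph0.1 h
    exact ⟨n, hn.le⟩
  · rintro ⟨n, hn⟩
    exact hn.trans_lt Cardinal.natCast_lt_aleph0
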